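/- arXiv:2506.03853 — 6 statements merged into one kernel-verified Lean document; each statement's English description precedes it below -/
import Mathlib

section
/- Let (T, l) be a labeled tree, i.e., a tree T together with a labeling l : V(T) → ℝ≥0. The mapping d_l is an ultrametric on the set V(T) if and only if the inequality max{l(u), l(v)} > 0 holds for every edge {u, v} ∈ E(T). -/
open SimpleGraph

/-- For a tree `G` with labeling `l`, the "ultrametric" `d_l`: the maximum of the labels of the
vertices of the unique path joining `u` and `v` (and `0` if `u = v`). -/
noncomputable def treeDist {V : Type*} (G : SimpleGraph V) (hG : G.IsTree) (l : V → NNReal)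
    (u v : V) : NNReal :=
  letI := Classical.decEq V
  if u = v then 0 else ((hG.existsUnique_path u v).choose.support.map l).foldr max 0

/-- A labeling is non-degenerate if `max {l u, l v} > 0` for every edge `{u, v}`. -/
def Nondeg {V : Type*} (G : SimpleGraph V) (l : V → NNReal) : Prop :=
  ∀ u v : V, G.Adj u v → 0 < max (l u) (l v)

/-- A distance function is separable if there is a countable dense subset. -/
def SeparableWith {α : Type*} (d : α → α → NNReal) : Prop :=
  ∃ S : Set α, S.Countable ∧ ∀ x : α, ∀ ε : NNReal, 0 < ε → ∃ s ∈ S, d x s < ε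

/-- A set is bounded if it is contained in a closed ball of positive radius. -/
def BoundedWith {α : Type*} (d : α → α → NNReal) (A : Set α) : Prop :=
  ∃ c : α, ∃ r : NNReal, 0 < r ∧ ∀ x ∈ A, d c x ≤ r

/-- A distance function is locally finite if every bounded set is finite. -/
def LocallyFiniteWith {α : Type*} (d : α → α → NNReal) : Prop :=
  ∀ A : Set α, BoundedWith d A → A.Finite

/-- A graph is a ray if its vertices can be enumerated without repetition as
`x₁, x₂, …` with edges exactly `{xₙ, xₙ₊₁}`. -/
def IsRay {W : Type*} (R : SimpleGraph W) : Prop :=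
  ∃ v : ℕ → W, Function.Bijective v ∧
    ∀ a b : W, R.Adj a b ↔ ∃ n : ℕ, (a = v n ∧ b = v (n + 1)) ∨ (a = v (n + 1) ∧ b = v n)

/-- A tree is a star graph if some vertex `c` (the center) is adjacent to every other vertex. -/
def IsStar {W : Type*} (S : SimpleGraph W) : Prop :=
  S.IsTree ∧ ∃ c : W, ∀ v : W, v ≠ c → S.Adj c v

theorem foldr_max_le_iff_aux (L : List NNReal) (c : NNReal) :
    L.foldr max 0 ≤ c ↔ ∀ a ∈ L, a ≤ c := by
  induction L with
  | nil => simp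
  | cons a L ih => simp [ih]

theorem treeDist_self_aux {V : Type*} (G : SimpleGraph V) (hG : G.IsTree) (l : V → NNReal)
    (x : V) : treeDist G hG l x x = 0 := by
  simp [treeDist]

/-- The labels along any walk bound the distance. -/
theorem treeDist_le_aux {V : Type*} (G : SimpleGraph V) (hG : G.IsTree) (l : V → NNReal)
    {x y : V} (p : G.Walk x y) (c : NNReal) (h : ∀ w ∈ p.support, l w ≤ c) :
    treeDist G hG l x y ≤ c := by
  classical
  by_cases hxy : x = y
  · simp [treeDist, hxy]
  · unfold treeDist
    rw [if_neg hxy, foldr_max_le_iff_aux]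
    have hE : (hG.existsUnique_path x y).choose = p.bypass :=
      ((hG.existsUnique_path x y).choose_spec.2 p.bypass p.bypass_isPath).symm
    rw [hE]
    intro a ha
    obtain ⟨w, hw, rfl⟩ := List.mem_map.1 ha
    exact h w (p.support_bypass_subset_support hw)

theorem exists_walk_aux {V : Type*} (G : SimpleGraph V) (hG : G.IsTree) (l : V → NNReal)
    {x y : V} (hxy : x ≠ y) :
    ∃ p : G.Walk x y, ∀ w ∈ p.support, l w ≤ treeDist G hG l x y := by
  refine ⟨(hG.existsUnique_path x y).choose, fun w hw => ?_⟩
  unfold treeDist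
  rw [if_neg hxy]
  exact (foldr_max_le_iff_aux _ _).1 le_rfl _ (List.mem_map_of_mem hw)

theorem treeDist_symm_le_aux {V : Type*} (G : SimpleGraph V) (hG : G.IsTree) (l : V → NNReal)
    (x y : V) : treeDist G hG l x y ≤ treeDist G hG l y x := by
  by_cases hxy : y = x
  · subst hxy; exact le_rfl
  · obtain ⟨p, hp⟩ := exists_walk_aux G hG l hxy
    exact treeDist_le_aux G hG l p.reverse _ (by simpa using hp)

theorem treeDist_isUltrametric_iff_nondeg {V : Type*} (G : SimpleGraph V) (hG : G.IsTree)
    (l : V → NNReal) :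
    ((∀ x y : V, treeDist G hG l x y = treeDist G hG l y x) ∧
      (∀ x y : V, treeDist G hG l x y = 0 ↔ x = y) ∧
      (∀ x y z : V,
        treeDist G hG l x y ≤ max (treeDist G hG l x z) (treeDist G hG l z y))) ↔
    Nondeg G l := by
  constructor
  · rintro ⟨-, h0, -⟩ u v huv
    by_contra hc
    have hc' : max (l u) (l v) = 0 := by simpa [pos_iff_ne_zero] using hc
    have : treeDist G hG l u v ≤ 0 := by
      refine treeDist_le_aux G hG l huv.toWalk 0 ?_
      intro w hw
      have hw' : w = u ∨ w = v := by simpa using hw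
      rw [← hc']
      rcases hw' with rfl | rfl
      · exact le_max_left _ _
      · exact le_max_right _ _
    exact huv.ne ((h0 u v).1 (le_antisymm this (zero_le)))
  · intro hN
    refine ⟨fun x y => le_antisymm (treeDist_symm_le_aux G hG l x y)
      (treeDist_symm_le_aux G hG l y x), fun x y => ⟨fun h => ?_, ?_⟩, fun x y z => ?_⟩
    · by_contra hxy
      obtain ⟨p, hp⟩ := exists_walk_aux G hG l hxy
      rw [h] at hp
      cases p with
      | nil => exact hxy rfl
      | @cons _ v _ ha q =>
        have h1 := hN _ _ ha
        have h2 := max_le (hp x (by simp)) (hp v (by simp))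
        exact absurd h1 (not_lt.2 h2)
    · rintro rfl
      exact treeDist_self_aux G hG l x
    · by_cases hxz : x = z
      · subst hxz; exact le_max_right _ _
      by_cases hzy : z = y
      · subst hzy; exact le_max_left _ _
      obtain ⟨p, hp⟩ := exists_walk_aux G hG l hxz
      obtain ⟨q, hq⟩ := exists_walk_aux G hG l hzy
      refine treeDist_le_aux G hG l (p.append q) _ fun w hw => ?_
      rcases (Walk.mem_support_append_iff p q).1 hw with h | h
      · exact (hp w h).trans (le_max_left _ _)
      · exact (hq w h).trans (le_max_right _ _)
end

section
/- Let T be a tree. Then the following statements are equivalent: (i) the vertex set V(T) is countable; (ii) for every non-degenerate labeling l : V(T) → ℝ≥0, the ultrametric space (V(T), d_l) is separable; (iii) there exists a non-degenerate labeling l : V(T) → ℝ≥0 such that (V(T), d_l) is a separable ultrametric space. -/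
open SimpleGraph

theorem le_foldr_max_aux {V : Type*} (l : V → NNReal) (L : List V) (w : V) (hw : w ∈ L) :
    l w ≤ (L.map l).foldr max 0 := by
  induction L with
  | nil => simp at hw
  | cons a L ih =>
    simp only [List.map_cons, List.foldr_cons]
    rcases List.mem_cons.1 hw with rfl | h
    · exact le_max_left _ _
    · exact (ih h).trans (le_max_right _ _)

theorem treeDist_lower_aux {V : Type*} (G : SimpleGraph V) (hG : G.IsTree) (l : V → NNReal)
    (u v : V) (h : u ≠ v) :
    l u ≤ treeDist G hG l u v ∧ ∃ y, G.Adj u y ∧ l y ≤ treeDist G hG l u v := by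
  unfold treeDist
  rw [if_neg h]
  generalize (hG.existsUnique_path u v).choose = p
  refine ⟨le_foldr_max_aux l _ _ p.start_mem_support, ?_⟩
  cases p with
  | nil => exact absurd rfl h
  | cons e q =>
    refine ⟨_, e, le_foldr_max_aux l _ _ ?_⟩
    rw [Walk.support_cons]
    exact List.mem_cons_of_mem _ q.start_mem_support

theorem common_nbr_unique_aux {V : Type*} (G : SimpleGraph V) (hG : G.IsTree) (a b x y : V)
    (hab : a ≠ b) (h1 : G.Adj x a) (h2 : G.Adj x b) (h3 : G.Adj y a) (h4 : G.Adj y b) :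
    x = y := by
  have key := (hG.existsUnique_path a b).unique
    (y₁ := Walk.cons h1.symm (Walk.cons h2 Walk.nil))
    (y₂ := Walk.cons h3.symm (Walk.cons h4 Walk.nil))
    (by simp [Walk.cons_isPath_iff, h2.ne, h1.ne', hab])
    (by simp [Walk.cons_isPath_iff, h4.ne, h3.ne', hab])
  have := congrArg Walk.support key
  simpa using this

theorem countable_of_separable_aux {V : Type*} (G : SimpleGraph V) (hG : G.IsTree)
    (l : V → NNReal) (hl : Nondeg G l) (hs : SeparableWith (treeDist G hG l)) :
    Countable V := by
  obtain ⟨S, hS, hd⟩ := hs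
  have hpos : ∀ x, 0 < l x → x ∈ S := by
    intro x hx
    obtain ⟨s, hsS, hlt⟩ := hd x (l x) hx
    by_contra hxS
    have hne : x ≠ s := fun e => hxS (e ▸ hsS)
    exact absurd (treeDist_lower_aux G hG l x s hne).1 (not_le.2 hlt)
  have hnb : ∀ x, x ∉ S → ∀ ε : NNReal, 0 < ε → ∃ y, G.Adj x y ∧ y ∈ S ∧ 0 < l y ∧ l y < ε := by
    intro x hxS ε hε
    obtain ⟨s, hsS, hlt⟩ := hd x ε hε
    have hne : x ≠ s := fun e => hxS (e ▸ hsS)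
    obtain ⟨-, y, hy, hle⟩ := treeDist_lower_aux G hG l x s hne
    have hx0 : ¬ 0 < l x := fun h => hxS (hpos x h)
    have hy0 : 0 < l y := (lt_max_iff.1 (hl x y hy)).resolve_left hx0
    exact ⟨y, hy, hpos y hy0, hy0, hle.trans_lt hlt⟩
  have htwo : ∀ x : (Sᶜ : Set V), ∃ p : S × S, p.1 ≠ p.2 ∧ G.Adj x p.1 ∧ G.Adj x p.2 := by
    intro x
    obtain ⟨a, ha, haS, ha0, -⟩ := hnb x x.2 1 one_pos
    obtain ⟨b, hb, hbS, -, hlt⟩ := hnb x x.2 (l a) ha0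
    refine ⟨(⟨a, haS⟩, ⟨b, hbS⟩), ?_, ha, hb⟩
    intro e
    have e' : a = b := congrArg Subtype.val e
    rw [e'] at hlt
    exact lt_irrefl _ hlt
  choose f hf using htwo
  have : Countable S := hS
  have hinj : Function.Injective f := by
    intro x y hxy
    obtain ⟨h0, h1, h2⟩ := hf x
    obtain ⟨-, h3, h4⟩ := hf y
    rw [← hxy] at h3 h4
    exact Subtype.ext (common_nbr_unique_aux G hG _ _ _ _ (fun e => h0 (Subtype.ext e)) h1 h2 h3 h4)
  have hc : (Sᶜ : Set V).Countable := hinj.countable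
  rw [← Set.countable_univ_iff, ← Set.union_compl_self S]
  exact hS.union hc

theorem countable_iff_forall_separable_iff_exists_separable {V : Type*} (G : SimpleGraph V)
    (hG : G.IsTree) :
    (Countable V ↔
      ∀ l : V → NNReal, Nondeg G l → SeparableWith (treeDist G hG l)) ∧
    (Countable V ↔
      ∃ l : V → NNReal, Nondeg G l ∧ SeparableWith (treeDist G hG l)) := by
  have h1 : Countable V → ∀ l : V → NNReal, Nondeg G l → SeparableWith (treeDist G hG l) := by
    intro h l _
    exact ⟨Set.univ, Set.countable_univ, fun x ε hε => ⟨x, trivial, by simpa [treeDist] using hε⟩⟩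
  have hone : Nondeg G (fun _ => 1) := fun u v _ => by simp
  refine ⟨⟨h1, fun h => countable_of_separable_aux G hG _ hone (h _ hone)⟩,
    ⟨fun h => ⟨_, hone, h1 h _ hone⟩, ?_⟩⟩
  rintro ⟨l, hl, hs⟩
  exact countable_of_separable_aux G hG l hl hs
end

section
/- Let T be a tree. Then the following statements are equivalent: (i) there exists a non-degenerate labeling l : V(T) → ℝ≥0 such that (V(T), d_l) is a separable ultrametric space; (ii) for every star graph S that is a subgraph of T there exists a non-degenerate labeling l_S : V(S) → ℝ≥0 such that the ultrametric space (V(S), d_{l_S}) is separable. -/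
open SimpleGraph

theorem le_foldr_max_aux_s4 (L : List NNReal) (a : NNReal) (h : a ∈ L) : a ≤ L.foldr max 0 := by
  induction L with
  | nil => simp at h
  | cons b L ih =>
    rcases List.mem_cons.1 h with h | h
    · subst h; exact le_max_left _ _
    · exact (ih h).trans (le_max_right _ _)

theorem le_treeDist_aux {V : Type*} (G : SimpleGraph V) (hG : G.IsTree) (l : V → NNReal)
    {u v w : V} (huv : u ≠ v) (hw : w ∈ (hG.existsUnique_path u v).choose.support) :
    l w ≤ treeDist G hG l u v := by
  unfold treeDist
  rw [if_neg huv]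
  exact le_foldr_max_aux_s4 _ _ (List.mem_map.2 ⟨w, hw, rfl⟩)

theorem mem_of_nbrs_aux {V : Type*} (G : SimpleGraph V) (hG : G.IsTree) {c u v : V}
    (hu : G.Adj c u) (hv : G.Adj c v) (huv : u ≠ v) (p : G.Walk u v) : c ∈ p.support := by
  classical
  have hq : (Walk.cons hu.symm (Walk.cons hv Walk.nil)).IsPath := by
    simp [Walk.cons_isPath_iff, hu.ne', hv.ne, huv]
  have h := (hG.existsUnique_path u v).unique hq p.bypass_isPath
  apply p.support_bypass_subset_support
  rw [← h]
  simp

theorem nbr_countable_aux {V : Type*} (G : SimpleGraph V) (hG : G.IsTree) (l : V → NNReal)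
    (hl : Nondeg G l) (hs : SeparableWith (treeDist G hG l)) (c : V) :
    (G.neighborSet c).Countable := by
  obtain ⟨S, hS, hd⟩ := hs
  have h1 : ∀ u : V, ∃ s, G.Adj c u → s ∈ S ∧ treeDist G hG l u s < max (l c) (l u) := by
    intro u
    by_cases h : G.Adj c u
    · obtain ⟨s, h1, h2⟩ := hd u _ (hl c u h)
      exact ⟨s, fun _ => ⟨h1, h2⟩⟩
    · exact ⟨u, fun h' => absurd h' h⟩
  choose f hf using h1
  have key : ∀ u, G.Adj c u → c ∉ (hG.existsUnique_path u (f u)).choose.support := by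
    intro u hu hc
    have hne : u ≠ f u := by
      intro h
      have hp := (hG.existsUnique_path u (f u)).choose_spec.1
      generalize (hG.existsUnique_path u (f u)).choose = p at hp hc
      generalize f u = s at *
      subst h
      rw [Walk.isPath_iff_eq_nil] at hp
      subst hp
      simp at hc
      exact hu.ne hc
    have h1 := le_treeDist_aux G hG l hne hc
    have h2 := le_treeDist_aux G hG l hne (Walk.start_mem_support _)
    exact absurd (hf u hu).2 (not_lt.2 (max_le h1 h2))
  refine Set.MapsTo.countable_of_injOn (f := f) (t := S) (fun u hu => (hf u hu).1) ?_ hS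
  intro u hu v hv huv
  by_contra hne
  have hkv := key v hv
  rw [← huv] at hkv
  have := mem_of_nbrs_aux G hG hu hv hne
    ((hG.existsUnique_path u (f u)).choose.append (hG.existsUnique_path v (f u)).choose.reverse)
  rw [Walk.mem_support_append_iff, Walk.support_reverse, List.mem_reverse] at this
  exact this.elim (key u hu) hkv

theorem countable_of_nbr_aux {V : Type*} (G : SimpleGraph V) (hG : G.Connected)
    (h : ∀ c, (G.neighborSet c).Countable) : Countable V := by
  obtain ⟨r⟩ := hG.nonempty
  let B : ℕ → Set V := fun n => Nat.rec {r} (fun _ A => ⋃ x ∈ A, G.neighborSet x) n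
  have hB : ∀ n, (B n).Countable := by
    intro n
    induction n with
    | zero => exact Set.countable_singleton r
    | succ n ih => exact ih.biUnion fun x _ => h x
  have hw : ∀ (u v : V) (p : G.Walk u v) (n : ℕ), u ∈ B n → ∃ m, v ∈ B m := by
    intro u v p
    induction p with
    | nil => exact fun n hn => ⟨n, hn⟩
    | cons hadj p ih =>
      intro n hn
      exact ih (n + 1) (Set.mem_biUnion hn hadj)
  rw [← Set.countable_univ_iff]
  refine (Set.countable_iUnion hB).mono fun v _ => ?_
  obtain ⟨p⟩ := hG.preconnected r v
  exact Set.mem_iUnion.2 (hw r v p 0 rfl)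

theorem exists_label_aux {V : Type*} (G : SimpleGraph V) (hG : G.IsTree) [Countable V] :
    ∃ l : V → NNReal, Nondeg G l ∧ SeparableWith (treeDist G hG l) := by
  refine ⟨fun _ => 1, fun _ _ _ => by simp, Set.univ, Set.countable_univ, ?_⟩
  intro x ε hε
  exact ⟨x, trivial, by simpa [treeDist] using hε⟩

theorem exists_separable_iff_every_star_subgraph {V : Type*} (G : SimpleGraph V)
    (hG : G.IsTree) :
    (∃ l : V → NNReal, Nondeg G l ∧ SeparableWith (treeDist G hG l)) ↔
    (∀ H : G.Subgraph, ∀ hS : IsStar H.coe,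
      ∃ lS : H.verts → NNReal, Nondeg H.coe lS ∧
        SeparableWith (treeDist H.coe hS.1 lS)) := by
  constructor
  · rintro ⟨l, hl, hs⟩ H hS
    haveI := countable_of_nbr_aux G hG.1 (nbr_countable_aux G hG l hl hs)
    exact exists_label_aux _ _
  · intro h
    suffices Countable V from exists_label_aux _ _
    refine countable_of_nbr_aux G hG.1 fun c => ?_
    let H : G.Subgraph :=
      { verts := insert c (G.neighborSet c)
        Adj := fun a b => G.Adj a b ∧ (a = c ∨ b = c)
        adj_sub := fun h => h.1
        edge_vert := by
          rintro a b ⟨h, rfl | rfl⟩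
          · exact Or.inl rfl
          · exact Or.inr h.symm
        symm := ⟨fun a b h => ⟨h.1.symm, h.2.symm⟩⟩ }
    let c' : H.verts := ⟨c, Or.inl rfl⟩
    have hc : ∀ v : H.verts, v ≠ c' → H.coe.Adj c' v := by
      rintro ⟨v, rfl | hv⟩ hne
      · exact absurd rfl hne
      · exact ⟨hv, Or.inl rfl⟩
    have hreach : ∀ v : H.verts, H.coe.Reachable c' v := by
      intro v
      by_cases hv : v = c'
      · rw [hv]
      · exact (hc v hv).reachable
    haveI : Nonempty H.verts := ⟨c'⟩
    have hT : H.coe.IsTree :=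
      ⟨Connected.mk fun a b => (hreach a).symm.trans (hreach b),
        hG.isAcyclic.comap H.hom H.hom_injective⟩
    obtain ⟨l, hl, hs⟩ := h H ⟨hT, c', hc⟩
    have h1 := (nbr_countable_aux H.coe hT l hl hs c').image Subtype.val
    refine h1.mono fun u hu => ?_
    exact ⟨⟨u, Or.inr hu⟩, ⟨hu, Or.inl rfl⟩, rfl⟩
end

section
/- Let R = (v_1, v_2, …, v_n, …) be a ray with a non-degenerate labeling l_R : V(R) → ℝ≥0. Then the ultrametric space (V(R), d_{l_R}) is locally finite if and only if limsup_{n → ∞} l_R(v_n) = ∞. -/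
open SimpleGraph

theorem ray_walk_mem {V : Type*} (R : SimpleGraph V) (v : ℕ → V)
    (hv : Function.Bijective v)
    (hadj : ∀ a b : V, R.Adj a b ↔
      ∃ n : ℕ, (a = v n ∧ b = v (n + 1)) ∨ (a = v (n + 1) ∧ b = v n))
    {a b : V} (p : R.Walk a b) : ∀ i j k : ℕ, a = v i → b = v j → i ≤ k → k ≤ j →
      v k ∈ p.support := by
  induction p with
  | nil =>
    intro i j k hi hj hik hkj
    have hij : i = j := hv.1 (hi.symm.trans hj)
    have hk : k = i := by omega
    subst hk
    simp [hi]
  | cons h p ih =>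
    intro i j k hi hj hik hkj
    rw [SimpleGraph.Walk.support_cons, List.mem_cons]
    rcases Nat.eq_or_lt_of_le hik with hk | hk
    · left
      rw [hi, hk]
    · right
      obtain ⟨n, ⟨h1, h2⟩ | ⟨h1, h2⟩⟩ := (hadj _ _).1 h
      · have hn : i = n := hv.1 (hi.symm.trans h1)
        exact ih (n + 1) j k h2 hj (by omega) hkj
      · have hn : i = n + 1 := hv.1 (hi.symm.trans h1)
        exact ih n j k h2 hj (by omega) hkj

theorem foldr_max_le_of {L : List NNReal} {M : NNReal} (h : ∀ x ∈ L, x ≤ M) :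
    L.foldr max 0 ≤ M := by
  induction L with
  | nil => simp
  | cons a L ih =>
    simp only [List.foldr_cons, max_le_iff]
    exact ⟨h a (by simp), ih fun x hx => h x (by simp [hx])⟩

theorem le_foldr_max_of {L : List NNReal} {x : NNReal} (h : x ∈ L) :
    x ≤ L.foldr max 0 := by
  induction L with
  | nil => simp at h
  | cons a L ih =>
    simp only [List.foldr_cons, le_max_iff]
    rcases List.mem_cons.1 h with h | h
    · exact Or.inl h.le
    · exact Or.inr (ih h)

theorem ray_locallyFinite_iff_limsup_top {V : Type*} (R : SimpleGraph V) (v : ℕ → V)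
    (hv : Function.Bijective v)
    (hadj : ∀ a b : V, R.Adj a b ↔
      ∃ n : ℕ, (a = v n ∧ b = v (n + 1)) ∨ (a = v (n + 1) ∧ b = v n))
    (hR : R.IsTree) (l : V → NNReal) (hl : Nondeg R l) :
    LocallyFiniteWith (treeDist R hR l) ↔
      Filter.atTop.limsup (fun n : ℕ => (l (v n) : ENNReal)) = ⊤ := by
  constructor
  · intro hfin
    by_contra hne
    obtain ⟨M, hM1, hM2⟩ := exists_between (lt_top_iff_ne_top.2 hne)
    have hev := Filter.eventually_lt_of_limsup_lt hM1
    obtain ⟨N, hN⟩ := Filter.eventually_atTop.1 hev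
    lift M to NNReal using hM2.ne
    set B : NNReal := max (max M ((Finset.range N).sup fun n => l (v n))) 1 with hB
    have hbd : ∀ x, l x ≤ B := by
      intro x
      obtain ⟨n, rfl⟩ := hv.2 x
      by_cases hn : N ≤ n
      · have h1 : l (v n) ≤ M := by exact_mod_cast (hN n hn).le
        exact h1.trans ((le_max_left _ _).trans (le_max_left _ _))
      · have h1 : l (v n) ≤ (Finset.range N).sup fun n => l (v n) :=
          Finset.le_sup (f := fun n => l (v n)) (Finset.mem_range.2 (not_le.1 hn))
        exact h1.trans ((le_max_right _ _).trans (le_max_left _ _))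
    have huniv : (Set.univ : Set V).Finite := by
      refine hfin _ ⟨v 0, B, lt_of_lt_of_le one_pos (le_max_right _ _), fun x _ => ?_⟩
      unfold treeDist
      split_ifs
      · exact zero_le
      · apply foldr_max_le_of
        intro y hy
        obtain ⟨z, -, rfl⟩ := List.mem_map.1 hy
        exact hbd z
    have : Infinite V := Infinite.of_injective v hv.1
    exact Set.infinite_univ huniv
  · intro htop A hA
    obtain ⟨c, r, hr, hA⟩ := hA
    obtain ⟨i, rfl⟩ := hv.2 c
    have hfr : ∃ᶠ n in Filter.atTop, (r : ENNReal) < (l (v n) : ENNReal) :=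
      Filter.frequently_lt_of_lt_limsup (by isBoundedDefault) (by rw [htop]; exact ENNReal.coe_lt_top)
    obtain ⟨k, hik, hk⟩ := Filter.frequently_atTop.1 hfr (i + 1)
    have hk' : r < l (v k) := by exact_mod_cast hk
    refine ((Set.finite_Iio k).image v).subset ?_
    intro x hx
    obtain ⟨j, rfl⟩ := hv.2 x
    refine ⟨j, ?_, rfl⟩
    by_contra hj
    have hkj : k ≤ j := not_lt.1 hj
    have hd := hA _ hx
    unfold treeDist at hd
    rw [if_neg (fun h => by have := hv.1 h; omega)] at hd
    refine absurd (le_trans ?_ hd) (not_le.2 hk')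
    apply le_foldr_max_of
    exact List.mem_map.2 ⟨v k, ray_walk_mem R v hv hadj _ i j k rfl rfl (by omega) hkj, rfl⟩
end

section
/- Let S be a star graph with a non-degenerate labeling l_S : V(S) → ℝ≥0. Then the ultrametric space (V(S), d_{l_S}) is locally finite if and only if the set W_ε = {v ∈ V(S) : l_S(v) ≤ ε} is finite for every ε > 0. -/
open SimpleGraph

theorem foldr_max_le_iff_aux_s10 {V : Type*} (l : V → NNReal) (L : List V) (r : NNReal) :
    (L.map l).foldr max 0 ≤ r ↔ ∀ x ∈ L, l x ≤ r := by
  induction L with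
  | nil => simp
  | cons a L ih => simp [ih]

theorem star_locallyFinite_iff_sublevel_finite {V : Type*} (S : SimpleGraph V)
    (hS : IsStar S) (l : V → NNReal) (hl : Nondeg S l) :
    LocallyFiniteWith (treeDist S hS.1 l) ↔
      ∀ ε : NNReal, 0 < ε → {v : V | l v ≤ ε}.Finite := by
  classical
  constructor
  · obtain ⟨c, hc⟩ := hS.2
    intro h ε hε
    apply h
    refine ⟨c, max ε (l c), lt_max_of_lt_left hε, ?_⟩
    intro v hv
    have hv' : l v ≤ ε := hv
    unfold treeDist
    split_ifs with hcv
    · exact zero_le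
    · have hadj : S.Adj c v := hc v (fun e => hcv e.symm)
      have hp : (Walk.cons hadj Walk.nil).IsPath := by simp [hcv]
      have he := (hS.1.existsUnique_path c v).unique
        (hS.1.existsUnique_path c v).choose_spec.1 hp
      rw [he, foldr_max_le_iff_aux_s10]
      intro x hx
      simp only [Walk.support_cons, Walk.support_nil, List.mem_cons, List.not_mem_nil,
        or_false] at hx
      rcases hx with rfl | rfl
      · exact le_max_right _ _
      · exact le_max_of_le_left hv'
  · rintro h A ⟨c, r, hr, hA⟩
    refine ((h r hr).insert c).subset ?_
    intro x hx
    have hd := hA x hx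
    unfold treeDist at hd
    split_ifs at hd with hcx
    · exact Or.inl hcx.symm
    · rw [foldr_max_le_iff_aux_s10] at hd
      exact Or.inr (hd x (Walk.end_mem_support _))
end

section
/- Let (T, l) be a labeled tree with non-degenerate labeling l : V(T) → ℝ≥0. Then the following statements are equivalent: (i) the ultrametric space (V(T), d_l) is locally finite; (ii) for every ray R that is a subgraph of T and every star graph S that is a subgraph of T, the ultrametric subspaces (V(R), d_l restricted to V(R) × V(R)) and (V(S), d_l restricted to V(S) × V(S)) are locally finite. -/
open SimpleGraph

theorem foldr_max_le_iff' (L : List NNReal) (r : NNReal) :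
    L.foldr max 0 ≤ r ↔ ∀ x ∈ L, x ≤ r := by
  induction L with
  | nil => simp
  | cons a t ih => simp [ih]

theorem treeDist_le_iff {V : Type*} (G : SimpleGraph V) (hG : G.IsTree) (l : V → NNReal)
    {u v : V} (h : u ≠ v) (p : G.Walk u v) (hp : p.IsPath) (r : NNReal) :
    treeDist G hG l u v ≤ r ↔ ∀ x ∈ p.support, l x ≤ r := by
  have hq : (hG.existsUnique_path u v).choose = p :=
    (hG.existsUnique_path u v).unique (hG.existsUnique_path u v).choose_spec.1 hp
  unfold treeDist
  rw [if_neg h, hq, foldr_max_le_iff']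
  simp

theorem treeDist_self' {V : Type*} (G : SimpleGraph V) (hG : G.IsTree) (l : V → NNReal)
    (u : V) : treeDist G hG l u u = 0 := by
  unfold treeDist
  rw [if_pos rfl]

theorem treeDist_mid {V : Type*} (G : SimpleGraph V) (hG : G.IsTree) (l : V → NNReal)
    {c w x : V} (h : G.dist c x = G.dist c w + G.dist w x) (r : NNReal)
    (hx : treeDist G hG l c x ≤ r) : treeDist G hG l c w ≤ r := by
  by_cases hcw : c = w
  · subst hcw
    rw [treeDist_self']
    exact zero_le
  obtain ⟨p, hp⟩ := hG.connected.exists_walk_length_eq_dist c w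
  obtain ⟨q, hq⟩ := hG.connected.exists_walk_length_eq_dist w x
  have hcx : c ≠ x := by
    rintro rfl
    rw [SimpleGraph.dist_self] at h
    have := hG.connected.dist_eq_zero_iff.1 (show G.dist c w = 0 by omega)
    exact hcw this
  have hpq : (p.append q).IsPath := by
    apply SimpleGraph.Walk.isPath_of_length_eq_dist
    rw [SimpleGraph.Walk.length_append, hp, hq, h]
  rw [treeDist_le_iff G hG l hcx _ hpq] at hx
  rw [treeDist_le_iff G hG l hcw p (SimpleGraph.Walk.isPath_of_length_eq_dist p hp)]
  intro y hy
  apply hx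
  rw [SimpleGraph.Walk.mem_support_append_iff]
  exact Or.inl hy

theorem exists_step {V : Type*} (G : SimpleGraph V) (hG : G.IsTree)
    {c v x : V} (h : G.dist c x = G.dist c v + G.dist v x) (hvx : x ≠ v) :
    ∃ w, G.Adj v w ∧ G.dist c w = G.dist c v + 1 ∧ G.dist c x = G.dist c w + G.dist w x := by
  obtain ⟨p, hp⟩ := hG.connected.exists_walk_length_eq_dist v x
  cases p with
  | nil => exact absurd rfl hvx
  | @cons _ w _ hadj q =>
    refine ⟨w, hadj, ?_⟩
    rw [SimpleGraph.Walk.length_cons] at hp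
    have h1 := SimpleGraph.dist_le q
    have h2 : G.dist c w ≤ G.dist c v + G.dist v w := hG.connected.dist_triangle
    have h3 : G.dist c x ≤ G.dist c w + G.dist w x := hG.connected.dist_triangle
    have h4 : G.dist v w = 1 := SimpleGraph.dist_eq_one_iff_adj.2 hadj
    omega

/-- The star with centre `v` and leaves `N`. -/
def starSub {V : Type*} (G : SimpleGraph V) (v : V) (N : Set V) (hN : ∀ w ∈ N, G.Adj v w) :
    G.Subgraph where
  verts := insert v N
  Adj a b := (a = v ∧ b ∈ N) ∨ (b = v ∧ a ∈ N)
  adj_sub := by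
    rintro a b (⟨rfl, h⟩ | ⟨rfl, h⟩)
    · exact hN _ h
    · exact (hN _ h).symm
  edge_vert := by
    rintro a b (⟨rfl, h⟩ | ⟨rfl, h⟩)
    · exact Set.mem_insert _ _
    · exact Set.mem_insert_of_mem _ h
  symm := ⟨fun a b h => h.symm⟩

theorem starSub_isStar {V : Type*} (G : SimpleGraph V) (hG : G.IsTree) (v : V) (N : Set V)
    (hN : ∀ w ∈ N, G.Adj v w) : IsStar (starSub G v N hN).coe := by
  have hadj : ∀ w : (starSub G v N hN).verts, w ≠ ⟨v, Set.mem_insert _ _⟩ →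
      (starSub G v N hN).coe.Adj ⟨v, Set.mem_insert _ _⟩ w := by
    rintro ⟨w, hw⟩ hne
    refine Or.inl ⟨rfl, ?_⟩
    rcases hw with rfl | hw
    · exact absurd rfl hne
    · exact hw
  refine ⟨⟨?_, ?_⟩, _, hadj⟩
  · haveI : Nonempty (starSub G v N hN).verts := ⟨⟨v, Set.mem_insert _ _⟩⟩
    have key : ∀ w, (starSub G v N hN).coe.Reachable ⟨v, Set.mem_insert _ _⟩ w := by
      intro w
      by_cases h : w = ⟨v, Set.mem_insert _ _⟩
      · rw [h]
      · exact (hadj w h).reachable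
    exact ⟨fun a b => (key a).symm.trans (key b)⟩
  · exact hG.isAcyclic.comap (starSub G v N hN).hom Subtype.val_injective

/-- The ray along a sequence. -/
def raySub {V : Type*} (G : SimpleGraph V) (s : ℕ → V) (hs : ∀ n, G.Adj (s n) (s (n + 1))) :
    G.Subgraph where
  verts := Set.range s
  Adj a b := ∃ n : ℕ, (a = s n ∧ b = s (n + 1)) ∨ (a = s (n + 1) ∧ b = s n)
  adj_sub := by
    rintro a b ⟨n, ⟨rfl, rfl⟩ | ⟨rfl, rfl⟩⟩
    · exact hs n
    · exact (hs n).symm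
  edge_vert := by
    rintro a b ⟨n, ⟨rfl, rfl⟩ | ⟨rfl, rfl⟩⟩
    · exact ⟨_, rfl⟩
    · exact ⟨_, rfl⟩
  symm := ⟨by
    rintro a b ⟨n, ⟨rfl, rfl⟩ | ⟨rfl, rfl⟩⟩
    · exact ⟨n, Or.inr ⟨rfl, rfl⟩⟩
    · exact ⟨n, Or.inl ⟨rfl, rfl⟩⟩⟩

theorem raySub_isRay {V : Type*} (G : SimpleGraph V) (s : ℕ → V)
    (hs : ∀ n, G.Adj (s n) (s (n + 1))) (hinj : Function.Injective s) :
    IsRay (raySub G s hs).coe := by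
  refine ⟨fun n => ⟨s n, n, rfl⟩, ⟨fun a b h => hinj (congrArg Subtype.val h), ?_⟩, ?_⟩
  · rintro ⟨_, n, rfl⟩
    exact ⟨n, rfl⟩
  · intro a b
    simp only [Subtype.ext_iff]
    exact Iff.rfl

theorem locallyFinite_iff_rays_and_stars {V : Type*} (G : SimpleGraph V) (hG : G.IsTree)
    (l : V → NNReal) (hl : Nondeg G l) :
    LocallyFiniteWith (treeDist G hG l) ↔
      ∀ H : G.Subgraph, IsRay H.coe ∨ IsStar H.coe →
        LocallyFiniteWith (fun x y : H.verts => treeDist G hG l ↑x ↑y) := by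
  constructor
  · rintro h H - A ⟨c, r, hr, hA⟩
    have : (Subtype.val '' A).Finite := by
      apply h
      refine ⟨c, r, hr, ?_⟩
      rintro _ ⟨x, hx, rfl⟩
      exact hA x hx
    exact this.of_finite_image Subtype.val_injective.injOn
  · rintro h A ⟨c, r, hr, hA⟩
    by_contra hinf
    set B : Set V := {x | treeDist G hG l c x ≤ r} with hB
    have hBinf : B.Infinite := fun hf => hinf (hf.subset hA)
    -- labels are bounded on the ball
    have hlab : ∀ x ∈ B, l x ≤ r := by
      have aux : ∀ x ∈ B, c ≠ x → l c ≤ r ∧ l x ≤ r := by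
        intro x hx hcx
        obtain ⟨p, hp⟩ := (hG.existsUnique_path c x).exists
        have := (treeDist_le_iff G hG l hcx p hp r).1 hx
        exact ⟨this _ p.start_mem_support, this _ p.end_mem_support⟩
      intro x hx
      by_cases hcx : c = x
      · obtain ⟨y, hy, hyc⟩ := hBinf.exists_notMem_finite (Set.finite_singleton c)
        rw [← hcx]
        exact (aux y hy (fun e => hyc e.symm)).1
      · exact (aux x hx hcx).2
    have hnb : ∀ v ∈ B, {w | G.Adj v w ∧ w ∈ B}.Finite := by
      intro v hv
      have hN : ∀ w ∈ {w | G.Adj v w ∧ w ∈ B}, G.Adj v w := fun w hw => hw.1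
      have h1 := h (starSub G v _ hN) (Or.inr (starSub_isStar G hG v _ hN)) Set.univ
        ⟨⟨v, Set.mem_insert _ _⟩, r, hr, ?_⟩
      · have h2 := h1.image Subtype.val
        rw [Set.image_univ, Subtype.range_coe] at h2
        exact h2.subset (Set.subset_insert _ _)
      · rintro ⟨w, hw⟩ -
        rcases hw with rfl | ⟨hadj, hwB⟩
        · show treeDist G hG l _ _ ≤ r
          rw [treeDist_self']
          exact hr.le
        · show treeDist G hG l v w ≤ r
          rw [treeDist_le_iff G hG l hadj.ne hadj.toWalk (SimpleGraph.Walk.IsPath.of_adj hadj)]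
          intro x hx
          simp at hx
          rcases hx with rfl | rfl
          · exact hlab _ hv
          · exact hlab _ hwB
    let D : V → Set V := fun v => {x | x ∈ B ∧ G.dist c x = G.dist c v + G.dist v x}
    have hDB : ∀ v, (D v).Infinite → v ∈ B := by
      intro v hv
      obtain ⟨x, hx⟩ := hv.nonempty
      exact treeDist_mid G hG l hx.2 r hx.1
    have hstep : ∀ v : {v // (D v).Infinite}, ∃ w : {v // (D v).Infinite},
        G.Adj v w ∧ G.dist c w = G.dist c v + 1 := by
      rintro ⟨v, hv⟩
      by_contra hcon
      apply hv
      have hfin : (⋃ w ∈ {w | (G.Adj v w ∧ w ∈ B) ∧ G.dist c w = G.dist c v + 1}, D w).Finite := by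
        apply Set.Finite.biUnion
        · exact (hnb v (hDB v hv)).subset fun w hw => hw.1
        · rintro w ⟨⟨h1, h2⟩, h3⟩
          by_contra h4
          exact hcon ⟨⟨w, h4⟩, h1, h3⟩
      refine (hfin.union (Set.finite_singleton v)).subset ?_
      intro x hx
      by_cases hxv : x = v
      · exact Or.inr hxv
      · left
        obtain ⟨w, h1, h2, h3⟩ := exists_step G hG hx.2 hxv
        exact Set.mem_biUnion (show w ∈ {w | (G.Adj v w ∧ w ∈ B) ∧ G.dist c w = G.dist c v + 1}
          from ⟨⟨h1, treeDist_mid G hG l h3 r hx.1⟩, h2⟩) ⟨hx.1, h3⟩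
    have hDc : (D c).Infinite := by
      refine hBinf.mono fun x hx => ⟨hx, ?_⟩
      simp
    choose f hf using hstep
    let t : ℕ → {v // (D v).Infinite} := fun n => f^[n] ⟨c, hDc⟩
    have ht : ∀ n, t (n + 1) = f (t n) := fun n => Function.iterate_succ_apply' f n _
    have hs : ∀ n, G.Adj (t n).1 (t (n + 1)).1 := by
      intro n
      rw [ht]
      exact (hf (t n)).1
    have hd : ∀ n, G.dist c (t n).1 = n := by
      intro n
      induction n with
      | zero => exact SimpleGraph.dist_self
      | succ n ih => rw [ht, (hf (t n)).2, ih]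
    have hinj : Function.Injective (fun n => (t n).1) := by
      intro a b hab
      have := congrArg (G.dist c) hab
      simpa [hd] using this
    have h1 := h (raySub G (fun n => (t n).1) hs) (Or.inl (raySub_isRay G _ hs hinj)) Set.univ
      ⟨⟨c, 0, rfl⟩, r, hr, ?_⟩
    · have h2 := h1.image Subtype.val
      rw [Set.image_univ, Subtype.range_coe] at h2
      exact Set.infinite_range_of_injective hinj h2
    · rintro ⟨_, n, rfl⟩ -
      exact hDB _ (t n).2
end
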